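/- arXiv:2412.09672 — 3 statements merged into one kernel-verified Lean document; each statement's English description precedes it below -/
import Mathlib

section
/- (Averaged two-copy Choi state over U(dk).) Let d ≥ 1, k ≥ 1 with D = dk ≥ 2, and consider the unitary group U(Fin d × Fin k) with its Haar probability measure; fix the environment state 0 ∈ Fin k. Then for all a₁, a₂, b₁, b₂, i₁, i₂, j₁, j₂ ∈ Fin d, (1/d²) Σ_{l₁, l₂ ∈ Fin k} ∫_{U(Fin d × Fin k)} U_{(i₁,l₁),(a₁,0)} U_{(i₂,l₂),(a₂,0)} conj(U_{(j₁,l₁),(b₁,0)}) conj(U_{(j₂,l₂),(b₂,0)}) dHaar(U) = [ k² δ_{a₁b₁}δ_{a₂b₂}δ_{i₁j₁}δ_{i₂j₂} + k δ_{a₁b₂}δ_{a₂b₁}δ_{i₁j₂}δ_{i₂j₁} − (k²/D) δ_{a₁b₂}δ_{a₂b₁}δ_{i₁j₁}δ_{i₂j₂} − (k/D) δ_{a₁b₁}δ_{a₂b₂}δ_{i₁j₂}δ_{i₂j₁} ] / (d²(D² − 1)). -/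
open MeasureTheory Matrix

noncomputable instance Matrix.measurableSpace {m n R : Type*} [MeasurableSpace R] :
    MeasurableSpace (Matrix m n R) := inferInstanceAs (MeasurableSpace (m → n → R))

instance Matrix.borelSpace {m n R : Type*} [Countable m] [Countable n]
    [TopologicalSpace R] [MeasurableSpace R] [BorelSpace R] [SecondCountableTopology R] :
    BorelSpace (Matrix m n R) := inferInstanceAs (BorelSpace (m → n → R))

instance {ι : Type*} [Fintype ι] [DecidableEq ι] :
    BorelSpace (Matrix.unitaryGroup ι ℂ) := Subtype.borelSpace _

/-- Kronecker delta with values in `ℂ`. -/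
noncomputable def δ {α : Type*} [DecidableEq α] (x y : α) : ℂ := if x = y then 1 else 0

/-!
Write `F` for the swap of the two tensor factors. The moment integral is an entry of the twirl of a
matrix unit `X` by `U ↦ U ⊗ U`. By invariance of the measure a twirl commutes with every `U ⊗ U`.
Commuting with the diagonal unitaries kills its entries at `(i, j), (p, q)` unless `{i, j} = {p, q}`
as multisets, the permutation unitaries leave three independent entries among these, and a unitary
mixing two coordinates gives one linear relation between the three, so the twirl is `α • 1 + β • F`.
Twirling preserves the traces of `X` and of `F * X`, and these two numbers determine `α` and `β`.
Summing `δ l l * δ m m` over the environment indices `l, m` gives `k ^ 2`, and summing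
`δ l m * δ m l` gives `k`.
-/

lemma δ_prod {α β : Type*} [DecidableEq α] [DecidableEq β] (x y : α) (u v : β) :
    δ (x, u) (y, v) = δ x y * δ u v := by
  simp only [δ, Prod.mk.injEq, ite_zero_mul_ite_zero, mul_one]

lemma one_apply_eq_δ {n : Type*} [DecidableEq n] (x y : n) : (1 : Matrix n n ℂ) x y = δ x y :=
  one_apply

section Twirl

variable {G A : Type*} [Group G] [MeasurableSpace G] [NormedRing A] [NormedAlgebra ℝ A]
  {μ : Measure G} {ρ : G →* A} {X : A}

/-- The twirl of `X` by a representation `ρ`: the average of the conjugates of `X` by `ρ g`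
(zero, by convention, when these are not integrable). -/
noncomputable def twirl (μ : Measure G) (ρ : G →* A) (X : A) : A :=
  ∫ g, ρ g * X * ρ g⁻¹ ∂μ

lemma commute_twirl [MeasurableMul G] [μ.IsMulLeftInvariant]
    (hX : Integrable (fun g ↦ ρ g * X * ρ g⁻¹) μ) (h : G) : Commute (ρ h) (twirl μ ρ X) :=
  calc ρ h * twirl μ ρ X
    _ = ∫ g, ρ (h * g) * X * ρ (h * g)⁻¹ * ρ h ∂μ := by
      rw [twirl, ← integral_const_mul_of_integrable hX]
      simp only [map_mul, _root_.mul_inv_rev, mul_assoc, ← map_mul ρ h⁻¹, inv_mul_cancel, map_one,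
        mul_one]
    _ = ∫ g, ρ g * X * ρ g⁻¹ * ρ h ∂μ :=
      integral_mul_left_eq_self (fun g ↦ ρ g * X * ρ g⁻¹ * ρ h) h
    _ = twirl μ ρ X * ρ h := integral_mul_const_of_integrable hX

lemma mul_twirl (hX : Integrable (fun g ↦ ρ g * X * ρ g⁻¹) μ) {C : A}
    (hC : ∀ g, Commute (ρ g) C) : C * twirl μ ρ X = twirl μ ρ (C * X) := by
  simp only [twirl, ← integral_const_mul_of_integrable hX, ← mul_assoc, (hC _).eq]

lemma apply_twirl {B : Type*} [NormedAddCommGroup B] [NormedSpace ℝ B] [CompleteSpace A]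
    [CompleteSpace B] [IsProbabilityMeasure μ] (hX : Integrable (fun g ↦ ρ g * X * ρ g⁻¹) μ)
    (L : A →L[ℝ] B) (hL : ∀ Y Z, L (Y * Z) = L (Z * Y)) : L (twirl μ ρ X) = L X := by
  simp [twirl, ← L.integral_comp_comm hX, hL _ (ρ _⁻¹), ← mul_assoc, ← map_mul]

open scoped Matrix.Norms.L2Operator in
lemma twirl_apply {n : Type*} [Fintype n] [DecidableEq n] {ρ : G →* Matrix n n ℂ}
    {X : Matrix n n ℂ} (hX : Integrable (fun g ↦ ρ g * X * ρ g⁻¹) μ) (i j : n) :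
    twirl μ ρ X i j = ∫ g, (ρ g * X * ρ g⁻¹) i j ∂μ :=
  ((entryLinearMap ℝ ℂ i j).toContinuousLinearMap.integral_comp_comm hX).symm

end Twirl

section TensorSquare

open scoped Kronecker

variable {ι : Type*} [Fintype ι] [DecidableEq ι]

variable (ι) in
/-- The representation `U ↦ U ⊗ U` of the unitary group on `ℂ^ι ⊗ ℂ^ι`. -/
def tensorSquare : unitaryGroup ι ℂ →* Matrix (ι × ι) (ι × ι) ℂ where
  toFun U := U.1 ⊗ₖ U.1
  map_one' := one_kronecker_one
  map_mul' U V := mul_kronecker_mul U.1 V.1 U.1 V.1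

variable (ι) in
/-- The operator `x ⊗ y ↦ y ⊗ x` exchanging the two factors of `ℂ^ι ⊗ ℂ^ι`. -/
def swapOperator : Matrix (ι × ι) (ι × ι) ℂ :=
  (Equiv.prodComm ι ι).toPEquiv.toMatrix

lemma tensorSquare_apply (U : unitaryGroup ι ℂ) (i j p q : ι) :
    tensorSquare ι U (i, j) (p, q) = U i p * U j q := rfl

lemma tensorSquare_inv (U : unitaryGroup ι ℂ) :
    tensorSquare ι U⁻¹ = star (tensorSquare ι U) :=
  (conjTranspose_kronecker U.1 U.1).symm

lemma swapOperator_mul_apply (M : Matrix (ι × ι) (ι × ι) ℂ) (i j : ι) (y : ι × ι) :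
    (swapOperator ι * M) (i, j) y = M (j, i) y :=
  congrFun₂ (PEquiv.toMatrix_toPEquiv_mul (Equiv.prodComm ι ι) M) (i, j) y

omit [Fintype ι] in
lemma swapOperator_apply (i j p q : ι) : swapOperator ι (i, j) (p, q) = δ i q * δ j p := by
  rw [← δ_prod, swapOperator, PEquiv.toMatrix_apply]
  simp [δ, Equiv.toPEquiv_apply, and_comm]

lemma commute_swapOperator (U : unitaryGroup ι ℂ) :
    Commute (tensorSquare ι U) (swapOperator ι) := by
  ext ⟨i, j⟩ ⟨p, q⟩
  rw [swapOperator_mul_apply, swapOperator, PEquiv.mul_toMatrix_toPEquiv]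
  exact mul_comm _ _

lemma trace_swapOperator : trace (swapOperator ι) = Fintype.card ι := by
  simp [trace, swapOperator_apply, Fintype.sum_prod_type, δ]

lemma swapOperator_mul_self : swapOperator ι * swapOperator ι = 1 := by
  ext ⟨i, j⟩ ⟨p, q⟩
  rw [swapOperator_mul_apply, swapOperator_apply, one_apply_eq_δ, δ_prod, mul_comm]

omit [Fintype ι] [DecidableEq ι] in
lemma exists_phases_mul_ne {i j p q : ι} (h : s(i, j) ≠ s(p, q)) :
    ∃ v : ι → ℂ, (∀ x, v x ∈ unitary ℂ) ∧ v i * v j ≠ v p * v q := by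
  classical
  let v (x y : ι) : ℂ := if y = x then Complex.I else 1
  have hv (x y : ι) : v x y ∈ unitary ℂ := by
    rw [Unitary.mem_iff_self_mul_star]
    by_cases hy : y = x <;> simp [v, hy]
  suffices ∃ x, v x i * v x j ≠ v x p * v x q from
    let ⟨x, hx⟩ := this; ⟨v x, hv x, hx⟩
  by_contra! hv_eq
  have hI : Complex.I ≠ 1 := by simp [Complex.ext_iff]
  have hnegI : (-1 : ℂ) ≠ Complex.I := by simp [Complex.ext_iff]
  have hneg : (-1 : ℂ) ≠ 1 := by norm_num
  have hi := hv_eq i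
  have hj := hv_eq j
  rw [Ne, Sym2.eq_iff] at h
  grind [Complex.I_mul_I]

lemma exists_unitary_apply_ne_zero (p q : ι) :
    ∃ U : unitaryGroup ι ℂ, U p p ≠ 0 ∧ U p q ≠ 0 := by
  let P : Matrix ι ι ℂ := (Equiv.swap p q).permMatrix ℂ
  have hP : P * P = 1 := by
    rw [← permMatrix_mul, Equiv.swap_mul_self, permMatrix_one]
  have hPs : star P = P := by
    rw [star_eq_conjTranspose, conjTranspose_permMatrix, Equiv.swap_inv]
  let z : ℂ := 4 / 5 * Complex.I
  have hU : (3 / 5 : ℂ) • 1 + z • P ∈ unitaryGroup ι ℂ := by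
    rw [mem_unitaryGroup_iff]
    have hnorm : (3 / 5) * (3 / 5) - z * z = 1 := by
      linear_combination (-16 / 25) * Complex.I_mul_I
    calc ((3 / 5 : ℂ) • 1 + z • P) * star ((3 / 5 : ℂ) • 1 + z • P)
      _ = ((3 / 5 : ℂ) • 1 + z • P) * ((3 / 5 : ℂ) • 1 - z • P) := by
        simp [hPs, z, sub_eq_add_neg]
      _ = ((3 / 5) * (3 / 5) - z * z) • 1 := by
        simp only [add_mul, mul_sub, smul_mul_smul_comm, hP, one_mul, mul_one]
        module
      _ = 1 := by rw [hnorm, one_smul]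
  refine ⟨⟨_, hU⟩, ?_, ?_⟩
  all_goals
    simp only [P, z, PEquiv.toMatrix_apply, Equiv.toPEquiv_apply, Matrix.add_apply,
      Matrix.smul_apply, one_apply]
    split_ifs <;> simp_all [Complex.ext_iff]

section Commutant

variable {M : Matrix (ι × ι) (ι × ι) ℂ} (hM : ∀ U, Commute (tensorSquare ι U) M)
include hM

lemma apply_perm_of_commute_tensorSquare (σ : Equiv.Perm ι) (i j p q : ι) :
    M (σ i, σ j) (σ p, σ q) = M (i, j) (p, q) := by
  have hσ : σ.permMatrix ℂ ∈ unitaryGroup ι ℂ := by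
    rw [mem_unitaryGroup_iff, star_eq_conjTranspose, conjTranspose_permMatrix, ← permMatrix_mul]
    simp
  have h := congrFun₂ (hM ⟨_, hσ⟩).eq (i, j) (σ p, σ q)
  simpa [mul_apply, Fintype.sum_prod_type, tensorSquare_apply, PEquiv.toMatrix_apply,
    Equiv.toPEquiv_apply, ite_and] using h

lemma apply_eq_zero_of_commute_tensorSquare {i j p q : ι} (h : s(i, j) ≠ s(p, q)) :
    M (i, j) (p, q) = 0 := by
  obtain ⟨v, hv, hne⟩ := exists_phases_mul_ne h
  have hU : diagonal v ∈ unitaryGroup ι ℂ := by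
    rw [mem_unitaryGroup_iff, star_eq_conjTranspose, diagonal_conjTranspose, diagonal_mul_diagonal,
      ← diagonal_one]
    exact congrArg diagonal (funext fun x ↦ Unitary.mul_star_self_of_mem (hv x))
  have hcomm : v i * v j * M (i, j) (p, q) = M (i, j) (p, q) * (v p * v q) := by
    simpa [tensorSquare, diagonal_kronecker_diagonal] using
      congrFun₂ (hM ⟨_, hU⟩).eq (i, j) (p, q)
  contrapose! hne
  exact mul_right_cancel₀ hne (hcomm.trans (mul_comm _ _))

-- Diagonal and permutation unitaries do not give this relation; it needs one mixing `p` and `q`.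
lemma apply_diag_of_commute_tensorSquare {p q : ι} (hpq : p ≠ q) :
    M (p, p) (p, p) = M (p, q) (p, q) + M (q, p) (p, q) := by
  obtain ⟨U, hUpp, hUpq⟩ := exists_unitary_apply_ne_zero p q
  have hleft : (M * tensorSquare ι U) (p, p) (p, q) = M (p, p) (p, p) * (U p p * U p q) := by
    rw [mul_apply, Fintype.sum_eq_single (p, p)]
    · rfl
    · rintro ⟨r, s⟩ hrs
      rw [apply_eq_zero_of_commute_tensorSquare hM (by grind), zero_mul]
  have hright : (tensorSquare ι U * M) (p, p) (p, q) =
      (M (p, q) (p, q) + M (q, p) (p, q)) * (U p p * U p q) := by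
    rw [mul_apply, Fintype.sum_eq_add (p, q) (q, p) (by grind)]
    · simp only [tensorSquare_apply]
      ring
    · rintro ⟨r, s⟩ hrs
      rw [apply_eq_zero_of_commute_tensorSquare hM (by grind), mul_zero]
  refine mul_right_cancel₀ (mul_ne_zero hUpp hUpq) ?_
  rw [← hleft, ← hright, (hM U).eq]

lemma exists_eq_smul_one_add_smul_swapOperator [Nontrivial ι] :
    ∃ α β : ℂ, M = α • 1 + β • swapOperator ι := by
  have htrans {i j p q : ι} (hij : i ≠ j) (hpq : p ≠ q) :
      ∃ σ : Equiv.Perm ι, σ i = p ∧ σ j = q :=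
    MulAction.is_two_pretransitive_iff.mp (Equiv.Perm.isMultiplyPretransitive ι 2) hij hpq
  obtain ⟨p, q, hpq⟩ := exists_pair_ne ι
  refine ⟨M (p, q) (p, q), M (q, p) (p, q), ?_⟩
  ext ⟨i, j⟩ ⟨r, s⟩
  simp only [Matrix.add_apply, Matrix.smul_apply, smul_eq_mul, one_apply_eq_δ, δ_prod,
    swapOperator_apply]
  by_cases h : s(i, j) = s(r, s)
  · obtain rfl | hij := eq_or_ne i j
    · obtain ⟨rfl, rfl⟩ : i = r ∧ i = s := by grind
      rw [← apply_perm_of_commute_tensorSquare hM (Equiv.swap i p), Equiv.swap_apply_left,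
        apply_diag_of_commute_tensorSquare hM hpq]
      simp [δ]
    · obtain ⟨rfl, rfl⟩ | ⟨rfl, rfl⟩ := Sym2.eq_iff.mp h
      · obtain ⟨σ, rfl, rfl⟩ := htrans hij hpq
        rw [apply_perm_of_commute_tensorSquare hM]
        simp [δ, hij]
      · obtain ⟨σ, rfl, rfl⟩ := htrans hij hpq.symm
        rw [← apply_perm_of_commute_tensorSquare hM σ i j]
        simp [δ, hij]
  · rw [apply_eq_zero_of_commute_tensorSquare hM h]
    rw [Sym2.eq_iff] at h
    simp only [δ]
    grind

end Commutant

open scoped Matrix.Norms.L2Operator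

lemma continuous_tensorSquare : Continuous (tensorSquare ι) := by
  refine continuous_matrix fun i j ↦ ?_
  have h (p q : ι) : Continuous fun U : unitaryGroup ι ℂ ↦ U p q :=
    continuous_subtype_val.matrix_elem p q
  exact (h _ _).mul (h _ _)

lemma integrable_conj_tensorSquare (μ : Measure (unitaryGroup ι ℂ)) [IsFiniteMeasure μ]
    (X : Matrix (ι × ι) (ι × ι) ℂ) :
    Integrable (fun U ↦ tensorSquare ι U * X * tensorSquare ι U⁻¹) μ := by
  have hcont := continuous_tensorSquare (ι := ι)
  refine Integrable.of_bound (by fun_prop) ‖X‖ (.of_forall fun U ↦ ?_)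
  have hmem (V : unitaryGroup ι ℂ) : tensorSquare ι V ∈ unitary _ := kronecker_mem_unitary V.2 V.2
  rw [CStarRing.norm_mul_mem_unitary _ (hmem _), CStarRing.norm_mem_unitary_mul _ (hmem _)]

variable {μ : Measure (unitaryGroup ι ℂ)} [IsProbabilityMeasure μ]

lemma trace_twirl_tensorSquare (X : Matrix (ι × ι) (ι × ι) ℂ) :
    trace (twirl μ (tensorSquare ι) X) = trace X :=
  apply_twirl (integrable_conj_tensorSquare μ X)
    ((traceLinearMap (ι × ι) ℝ ℂ).toContinuousLinearMap) trace_mul_comm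

theorem twirl_tensorSquare [Nontrivial ι] [μ.IsMulLeftInvariant] (X : Matrix (ι × ι) (ι × ι) ℂ) :
    twirl μ (tensorSquare ι) X = ((Fintype.card ι : ℂ) ^ 2 - 1)⁻¹ •
      ((trace X - trace (swapOperator ι * X) / Fintype.card ι) • 1 +
        (trace (swapOperator ι * X) - trace X / Fintype.card ι) • swapOperator ι) := by
  obtain ⟨α, β, h⟩ := exists_eq_smul_one_add_smul_swapOperator
    (commute_twirl (integrable_conj_tensorSquare μ X))
  have htr : trace X = α * Fintype.card ι ^ 2 + β * Fintype.card ι := by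
    rw [← trace_twirl_tensorSquare (μ := μ), h]
    simp [trace_swapOperator, sq]
  have htr' : trace (swapOperator ι * X) = α * Fintype.card ι + β * Fintype.card ι ^ 2 := by
    rw [← trace_twirl_tensorSquare (μ := μ),
      ← mul_twirl (integrable_conj_tensorSquare μ X) commute_swapOperator, h]
    simp [mul_add, swapOperator_mul_self, trace_swapOperator, sq]
  have hN : (Fintype.card ι : ℂ) ≠ 0 := by simp
  have hN' : (Fintype.card ι : ℂ) ^ 2 - 1 ≠ 0 := by
    have : (1 : ℝ) < (Fintype.card ι) ^ 2 := mod_cast Nat.one_lt_pow two_ne_zero Fintype.one_lt_card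
    exact sub_ne_zero.mpr (mod_cast this.ne')
  rw [h, htr, htr', smul_add, smul_smul, smul_smul]
  congr 2 <;> field_simp <;> ring

theorem integral_unitary_moment_two [Nontrivial ι] [μ.IsMulLeftInvariant]
    (i j p q a b r s : ι) :
    ∫ U : unitaryGroup ι ℂ, U i a * U j b * starRingEnd ℂ (U p r) * starRingEnd ℂ (U q s) ∂μ =
      ((δ a r * δ b s - δ a s * δ b r / Fintype.card ι) * (δ i p * δ j q) +
        (δ a s * δ b r - δ a r * δ b s / Fintype.card ι) * (δ i q * δ j p)) /
      ((Fintype.card ι : ℂ) ^ 2 - 1) := by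
  let X : Matrix (ι × ι) (ι × ι) ℂ := single (a, b) (r, s) 1
  have hentry : twirl μ (tensorSquare ι) X (i, j) (p, q) = ∫ U : unitaryGroup ι ℂ,
      U i a * U j b * starRingEnd ℂ (U p r) * starRingEnd ℂ (U q s) ∂μ := by
    rw [twirl_apply (integrable_conj_tensorSquare μ X)]
    simp [X, tensorSquare_inv, mul_apply, single_apply, tensorSquare_apply, ite_and, mul_assoc]
  have htr : trace X = δ a r * δ b s := by
    rw [← δ_prod, ← one_mul X, trace_mul_single]
    simp [one_apply, δ, eq_comm]
  have htr' : trace (swapOperator ι * X) = δ a s * δ b r := by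
    rw [trace_mul_single]
    simp [swapOperator_apply, δ, eq_comm, mul_comm]
  rw [← hentry, twirl_tensorSquare, htr, htr']
  simp only [Matrix.smul_apply, Matrix.add_apply, smul_eq_mul, one_apply_eq_δ, δ_prod,
    swapOperator_apply]
  ring

end TensorSquare

theorem averaged_choi_t_two_general {S E : Type*} [Fintype S] [DecidableEq S] [Fintype E]
    [DecidableEq E] [Nontrivial (S × E)] (μ : Measure (unitaryGroup (S × E) ℂ))
    [μ.IsMulLeftInvariant] [IsProbabilityMeasure μ] (e : E) (a₁ a₂ b₁ b₂ i₁ i₂ j₁ j₂ : S) :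
    (1 / (Fintype.card S : ℂ) ^ 2) * ∑ l₁ : E, ∑ l₂ : E,
        ∫ U : unitaryGroup (S × E) ℂ,
          U (i₁, l₁) (a₁, e) * U (i₂, l₂) (a₂, e) *
            (starRingEnd ℂ) (U (j₁, l₁) (b₁, e)) *
            (starRingEnd ℂ) (U (j₂, l₂) (b₂, e)) ∂μ =
      ((Fintype.card E : ℂ) ^ 2 * (δ a₁ b₁ * δ a₂ b₂ * δ i₁ j₁ * δ i₂ j₂) +
          (Fintype.card E : ℂ) * (δ a₁ b₂ * δ a₂ b₁ * δ i₁ j₂ * δ i₂ j₁) -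
          ((Fintype.card E : ℂ) ^ 2 / ((Fintype.card S : ℂ) * Fintype.card E)) *
            (δ a₁ b₂ * δ a₂ b₁ * δ i₁ j₁ * δ i₂ j₂) -
          ((Fintype.card E : ℂ) / ((Fintype.card S : ℂ) * Fintype.card E)) *
            (δ a₁ b₁ * δ a₂ b₂ * δ i₁ j₂ * δ i₂ j₁)) /
        ((Fintype.card S : ℂ) ^ 2 * (((Fintype.card S : ℂ) * Fintype.card E) ^ 2 - 1)) := by
  have hself (l : E) : δ l l = 1 := if_pos rfl
  have hloop : ∑ l : E, ∑ m : E, δ l m * δ m l = Fintype.card E := by simp [δ]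
  have hpair (x y : ℂ) (l m : E) : x * δ l m * (y * δ m l) = x * y * (δ l m * δ m l) :=
    mul_mul_mul_comm _ _ _ _
  simp only [integral_unitary_moment_two, δ_prod, hself, mul_one, Fintype.card_prod, Nat.cast_mul]
  simp only [hpair, ← Finset.sum_div, Finset.sum_add_distrib, Finset.sum_const, Finset.card_univ,
    nsmul_eq_mul, ← Finset.mul_sum, hloop]
  simp only [div_eq_mul_inv, mul_inv]
  ring

/-- Entries of the Haar-averaged two-copy Choi–Jamiołkowski state over
`U(dk)`, with environment of dimension `k` initialised in `|0⟩`. -/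
theorem averaged_choi_t_two (d k : ℕ) (hd : 1 ≤ d) (hk : 1 ≤ k) (hD : 2 ≤ d * k)
    (μ : Measure (Matrix.unitaryGroup (Fin d × Fin k) ℂ)) [μ.IsHaarMeasure]
    [IsProbabilityMeasure μ] (a₁ a₂ b₁ b₂ i₁ i₂ j₁ j₂ : Fin d) :
    (1 / (d : ℂ) ^ 2) * ∑ l₁ : Fin k, ∑ l₂ : Fin k,
        ∫ U : Matrix.unitaryGroup (Fin d × Fin k) ℂ,
          U (i₁, l₁) (a₁, (⟨0, hk⟩ : Fin k)) * U (i₂, l₂) (a₂, (⟨0, hk⟩ : Fin k)) *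
            (starRingEnd ℂ) (U (j₁, l₁) (b₁, (⟨0, hk⟩ : Fin k))) *
            (starRingEnd ℂ) (U (j₂, l₂) (b₂, (⟨0, hk⟩ : Fin k))) ∂μ =
      ((k : ℂ) ^ 2 * (δ a₁ b₁ * δ a₂ b₂ * δ i₁ j₁ * δ i₂ j₂) +
          (k : ℂ) * (δ a₁ b₂ * δ a₂ b₁ * δ i₁ j₂ * δ i₂ j₁) -
          ((k : ℂ) ^ 2 / ((d : ℂ) * k)) * (δ a₁ b₂ * δ a₂ b₁ * δ i₁ j₁ * δ i₂ j₂) -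
          ((k : ℂ) / ((d : ℂ) * k)) * (δ a₁ b₁ * δ a₂ b₂ * δ i₁ j₂ * δ i₂ j₁)) /
        ((d : ℂ) ^ 2 * (((d : ℂ) * k) ^ 2 - 1)) := by
  have : Nontrivial (Fin d × Fin k) :=
    Fintype.one_lt_card_iff_nontrivial.mp (by simpa using Nat.lt_of_succ_le hD)
  simpa only [Fintype.card_fin] using
    averaged_choi_t_two_general μ (⟨0, hk⟩ : Fin k) a₁ a₂ b₁ b₂ i₁ i₂ j₁ j₂
end

section
/- Let d ≥ 1 and let (ψ_m)_{m<M} (M ≥ 1) be a complex projective 2-design of unit vectors in ℂ^d. Then the average purity of the decohered probability vectors is fixed: (1/M) Σ_{m<M} Σ_{i ∈ Fin d} |ψ_m(i)|⁴ = 2/(d+1). In particular, if all states of the design have the same probability vector up to permutation (as for isocoherent MUB in d = 4), each state satisfies Σ_i |ψ_m(i)|⁴ = 2/(d+1), which equals 2/5 for d = 4. -/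
open MeasureTheory Matrix

/-!
For a unit vector `ψ` and a Haar random unitary `V`, left invariance gives the scalars
`v ⬝ᵥ V *ᵥ ψ` the same distribution for all unit vectors `v`, so `𝔼 |v ⬝ᵥ V *ᵥ ψ|⁴ = ‖v‖⁴ a` with
a single constant `a`. With `y = V *ᵥ ψ`, averaging `|yᵢ + c yⱼ|⁴` over the fourth roots of unity
`c` gives `|yᵢ|⁴ + |yⱼ|⁴ + 4 |yᵢ|² |yⱼ|²`, whence `𝔼 |yᵢ|² |yⱼ|² = a / 2` for `i ≠ j`. Expanding
`(∑ᵢ |yᵢ|²)² = 1` then forces `a = 2 / (d (d + 1))`, and the entries of a `2`-design have the same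
fourth moments as those of `y`.
-/

section UnitaryGroup

variable {𝕜 ι : Type*} [RCLike 𝕜] [Fintype ι] [DecidableEq ι]

instance compactSpace_unitaryGroup : CompactSpace (unitaryGroup ι 𝕜) := by
  have hball : IsCompact (Set.univ.pi fun _ : ι => Set.univ.pi fun _ : ι =>
      Metric.closedBall (0 : 𝕜) 1) :=
    isCompact_univ_pi fun _ => isCompact_univ_pi fun _ => isCompact_closedBall 0 1
  have hclosed : IsClosed (unitaryGroup ι 𝕜 : Set (Matrix ι ι 𝕜)) := isClosed_unitary
  refine isCompact_iff_compactSpace.mp (hball.of_isClosed_subset hclosed ?_)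
  intro U hU i _ j _
  exact mem_closedBall_zero_iff.mpr (entry_norm_bound_of_unitary hU i j)

theorem sum_norm_sq_unitary_mulVec (V : unitaryGroup ι 𝕜) (x : ι → 𝕜) :
    ∑ i, ‖(V.1 *ᵥ x) i‖ ^ 2 = ∑ i, ‖x i‖ ^ 2 := by
  have star_dotProduct_self (y : ι → 𝕜) : star y ⬝ᵥ y = ((∑ i, ‖y i‖ ^ 2 : ℝ) : 𝕜) := by
    simp [dotProduct, RCLike.conj_mul]
  apply RCLike.ofReal_injective (K := 𝕜)
  rw [← star_dotProduct_self, ← star_dotProduct_self, star_mulVec, dotProduct_mulVec,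
    vecMul_vecMul, ← star_eq_conjTranspose, UnitaryGroup.star_mul_self, vecMul_one]

theorem exists_unitary_row_eq (i : ι) {v : ι → 𝕜} (hv : ∑ k, ‖v k‖ ^ 2 = 1) :
    ∃ W : unitaryGroup ι 𝕜, W.1.row i = v := by
  have hnorm : ‖WithLp.toLp 2 v‖ = 1 := by
    rw [EuclideanSpace.norm_eq, hv, Real.sqrt_one]
  have horth : Orthonormal 𝕜 (({i} : Set ι).domRestrict fun _ => WithLp.toLp 2 v) :=
    ⟨fun _ => hnorm, fun j k hjk => (hjk (Subsingleton.elim j k)).elim⟩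
  obtain ⟨b, hb⟩ := horth.exists_orthonormalBasis_extension_of_card_eq finrank_euclideanSpace
  refine ⟨⟨((EuclideanSpace.basisFun ι 𝕜).toBasis.toMatrix b)ᵀ, transpose_mem_unitaryGroup_iff.mpr
    (OrthonormalBasis.toMatrix_orthonormalBasis_mem_unitary _ b)⟩, ?_⟩
  ext k
  simp [Module.Basis.toMatrix_apply, hb i rfl]

end UnitaryGroup

theorem sum_norm_add_I_pow_mul_pow_four (z w : ℂ) :
    ∑ k ∈ Finset.range 4, ‖z + Complex.I ^ k * w‖ ^ 4 =
      4 * (‖z‖ ^ 4 + ‖w‖ ^ 4 + 4 * (‖z‖ ^ 2 * ‖w‖ ^ 2)) := by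
  have norm_pow_four (u : ℂ) : ‖u‖ ^ 4 = (u.re * u.re + u.im * u.im) ^ 2 := by
    rw [← Complex.normSq_apply, Complex.normSq_eq_norm_sq, ← pow_mul]
  simp only [norm_pow_four, ← Complex.normSq_eq_norm_sq, Complex.normSq_apply]
  simp only [Finset.sum_range_succ, Finset.range_one, Finset.sum_singleton, pow_succ, pow_zero,
    one_mul, Complex.add_re, Complex.add_im, Complex.mul_re, Complex.mul_im, Complex.I_mul_I,
    Complex.neg_re, Complex.neg_im, Complex.one_re, Complex.one_im, Complex.I_re, Complex.I_im]
  ring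

section HaarMoments

variable {ι : Type*} [Fintype ι] [DecidableEq ι] (μ : Measure (unitaryGroup ι ℂ))

section Invariance

variable [μ.IsMulLeftInvariant]

theorem integral_comp_dotProduct_mulVec {E : Type*} [NormedAddCommGroup E] [NormedSpace ℝ E]
    (F : ℂ → E) {v : ι → ℂ} (hv : ∑ k, ‖v k‖ ^ 2 = 1) (ψ : ι → ℂ) (i : ι) :
    ∫ V, F (v ⬝ᵥ V.1 *ᵥ ψ) ∂μ = ∫ V, F ((V.1 *ᵥ ψ) i) ∂μ := by
  obtain ⟨W, rfl⟩ := exists_unitary_row_eq i hv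
  rw [← integral_mul_left_eq_self (fun V => F ((V.1 *ᵥ ψ) i)) W]
  simp only [UnitaryGroup.mul_val, ← mulVec_mulVec]
  rfl

theorem integral_norm_dotProduct_mulVec_pow (t : ℕ) (v ψ : ι → ℂ) (i : ι) :
    ∫ V, ‖v ⬝ᵥ V.1 *ᵥ ψ‖ ^ (2 * t) ∂μ =
      (∑ k, ‖v k‖ ^ 2) ^ t * ∫ V, ‖(V.1 *ᵥ ψ) i‖ ^ (2 * t) ∂μ := by
  rcases eq_or_ne v 0 with rfl | hv
  · rcases eq_or_ne t 0 with rfl | ht <;> simp [*]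
  have hpos : 0 < ∑ k, ‖v k‖ ^ 2 := by
    obtain ⟨k, hk⟩ := Function.ne_iff.mp hv
    exact Finset.sum_pos' (fun _ _ => by positivity) ⟨k, Finset.mem_univ k, by positivity⟩
  obtain ⟨r, hr, hrsq⟩ : ∃ r : ℝ, 0 < r ∧ r ^ 2 = ∑ k, ‖v k‖ ^ 2 :=
    ⟨√(∑ k, ‖v k‖ ^ 2), Real.sqrt_pos.mpr hpos, Real.sq_sqrt hpos.le⟩
  have hunit : ∑ k, ‖((r : ℂ)⁻¹ • v) k‖ ^ 2 = 1 := by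
    simp only [Pi.smul_apply, norm_smul, norm_inv, Complex.norm_real, mul_pow, ← Finset.mul_sum]
    rw [← hrsq, Real.norm_of_nonneg hr.le]
    field_simp
  rw [← integral_comp_dotProduct_mulVec μ (fun z => ‖z‖ ^ (2 * t)) hunit ψ i,
    ← integral_const_mul, ← hrsq]
  congr 1 with V
  rw [smul_dotProduct, norm_smul, norm_inv, Complex.norm_real, Real.norm_of_nonneg hr.le,
    mul_pow, inv_pow, ← pow_mul, mul_inv_cancel_left₀ (by positivity)]

theorem integral_norm_mulVec_pow_eq (t : ℕ) (ψ : ι → ℂ) (i j : ι) :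
    ∫ V, ‖(V.1 *ᵥ ψ) i‖ ^ (2 * t) ∂μ = ∫ V, ‖(V.1 *ᵥ ψ) j‖ ^ (2 * t) ∂μ := by
  simpa [Pi.single_apply, apply_ite] using
    integral_norm_dotProduct_mulVec_pow μ t (Pi.single i 1) ψ j

theorem integral_norm_mulVec_add_mul_mulVec_pow (t : ℕ) (ψ : ι → ℂ) {i j : ι} (hij : i ≠ j)
    {c : ℂ} (hc : ‖c‖ = 1) :
    ∫ V, ‖(V.1 *ᵥ ψ) i + c * (V.1 *ᵥ ψ) j‖ ^ (2 * t) ∂μ =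
      2 ^ t * ∫ V, ‖(V.1 *ᵥ ψ) i‖ ^ (2 * t) ∂μ := by
  let v : ι → ℂ := Pi.single i 1 + Pi.single j c
  have hnorm : ∑ k, ‖v k‖ ^ 2 = 2 := by
    rw [Fintype.sum_eq_add i j hij]
    · simp [v, hij, hij.symm, hc, one_add_one_eq_two]
    · rintro k ⟨hki, hkj⟩
      simp [v, hki, hkj]
  have hdot (x : ι → ℂ) : v ⬝ᵥ x = x i + c * x j := by
    simp [v, add_dotProduct]
  simpa only [hdot, hnorm] using integral_norm_dotProduct_mulVec_pow μ t v ψ i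

end Invariance

theorem integrable_comp_mulVec [IsFiniteMeasureOnCompacts μ] {E : Type*} [NormedAddCommGroup E]
    {f : (ι → ℂ) → E} (hf : Continuous f) (ψ : ι → ℂ) :
    Integrable (fun V : unitaryGroup ι ℂ => f (V.1 *ᵥ ψ)) μ :=
  (hf.comp (continuous_subtype_val.matrix_mulVec continuous_const)).integrable_of_hasCompactSupport
    (HasCompactSupport.of_compactSpace _)

theorem integral_norm_sq_mulVec_mul_norm_sq_mulVec [μ.IsMulLeftInvariant]
    [IsFiniteMeasureOnCompacts μ] (ψ : ι → ℂ) {i j : ι} (hij : i ≠ j) :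
    ∫ V, ‖(V.1 *ᵥ ψ) i‖ ^ 2 * ‖(V.1 *ᵥ ψ) j‖ ^ 2 ∂μ =
      (∫ V, ‖(V.1 *ᵥ ψ) i‖ ^ 4 ∂μ) / 2 := by
  have hint {f : (ι → ℂ) → ℝ} (hf : Continuous f) : Integrable (fun V => f (V.1 *ᵥ ψ)) μ :=
    integrable_comp_mulVec μ hf ψ
  have hphase (k : ℕ) :
      ∫ V, ‖(V.1 *ᵥ ψ) i + Complex.I ^ k * (V.1 *ᵥ ψ) j‖ ^ 4 ∂μ =
        2 ^ 2 * ∫ V, ‖(V.1 *ᵥ ψ) i‖ ^ 4 ∂μ :=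
    integral_norm_mulVec_add_mul_mulVec_pow μ 2 ψ hij (by simp)
  have haverage :
      ∑ k ∈ Finset.range 4, ∫ V, ‖(V.1 *ᵥ ψ) i + Complex.I ^ k * (V.1 *ᵥ ψ) j‖ ^ 4 ∂μ =
        4 * (∫ V, ‖(V.1 *ᵥ ψ) i‖ ^ 4 ∂μ + ∫ V, ‖(V.1 *ᵥ ψ) j‖ ^ 4 ∂μ +
          4 * ∫ V, ‖(V.1 *ᵥ ψ) i‖ ^ 2 * ‖(V.1 *ᵥ ψ) j‖ ^ 2 ∂μ) := by
    rw [← integral_finsetSum _ fun k _ =>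
      hint (f := fun y => ‖y i + Complex.I ^ k * y j‖ ^ 4) (by fun_prop)]
    simp only [sum_norm_add_I_pow_mul_pow_four]
    rw [integral_const_mul, integral_add, integral_add, integral_const_mul]
    · exact hint (f := fun y => ‖y i‖ ^ 4) (by fun_prop)
    · exact hint (f := fun y => ‖y j‖ ^ 4) (by fun_prop)
    · exact hint (f := fun y => ‖y i‖ ^ 4 + ‖y j‖ ^ 4) (by fun_prop)
    · exact hint (f := fun y => 4 * (‖y i‖ ^ 2 * ‖y j‖ ^ 2)) (by fun_prop)
  have hsymm : ∫ V, ‖(V.1 *ᵥ ψ) j‖ ^ 4 ∂μ = ∫ V, ‖(V.1 *ᵥ ψ) i‖ ^ 4 ∂μ :=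
    integral_norm_mulVec_pow_eq μ 2 ψ j i
  simp only [hphase, hsymm, Finset.sum_const, Finset.card_range, nsmul_eq_mul,
    Nat.cast_ofNat] at haverage
  linarith

theorem integral_norm_mulVec_pow_four [μ.IsMulLeftInvariant] [IsProbabilityMeasure μ] {ψ : ι → ℂ}
    (hψ : ∑ k, ‖ψ k‖ ^ 2 = 1) (i : ι) :
    ∫ V, ‖(V.1 *ᵥ ψ) i‖ ^ 4 ∂μ = 2 / (Fintype.card ι * (Fintype.card ι + 1)) := by
  set a := ∫ V, ‖(V.1 *ᵥ ψ) i‖ ^ 4 ∂μ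
  have hmoment (j k : ι) : ∫ V, ‖(V.1 *ᵥ ψ) j‖ ^ 2 * ‖(V.1 *ᵥ ψ) k‖ ^ 2 ∂μ =
      a / 2 + if j = k then a / 2 else 0 := by
    have hj : ∫ V, ‖(V.1 *ᵥ ψ) j‖ ^ 4 ∂μ = a := integral_norm_mulVec_pow_eq μ 2 ψ j i
    split_ifs with hjk
    · subst hjk
      simp only [← pow_add, Nat.reduceAdd, hj, add_halves]
    · rw [integral_norm_sq_mulVec_mul_norm_sq_mulVec μ ψ hjk, hj, add_zero]
  have hint (j k : ι) : Integrable (fun V => ‖(V.1 *ᵥ ψ) j‖ ^ 2 * ‖(V.1 *ᵥ ψ) k‖ ^ 2) μ :=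
    integrable_comp_mulVec μ (f := fun y => ‖y j‖ ^ 2 * ‖y k‖ ^ 2) (by fun_prop) ψ
  have htotal : ∑ j, ∑ k, ∫ V, ‖(V.1 *ᵥ ψ) j‖ ^ 2 * ‖(V.1 *ᵥ ψ) k‖ ^ 2 ∂μ = 1 := by
    simp_rw [← integral_finsetSum _ fun k _ => hint _ k]
    rw [← integral_finsetSum _ fun j _ => integrable_finsetSum _ fun k _ => hint j k]
    simp [← Finset.sum_mul_sum, sum_norm_sq_unitary_mulVec, hψ]
  have hcard : (0 : ℝ) < Fintype.card ι := Nat.cast_pos.mpr (Fintype.card_pos_iff.mpr ⟨i⟩)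
  simp only [hmoment, Finset.sum_add_distrib, Finset.sum_const, Finset.sum_ite_eq, Finset.mem_univ,
    if_true, Finset.card_univ, nsmul_eq_mul] at htotal
  rw [eq_div_iff (by positivity)]
  linarith

end HaarMoments

section Designs

variable {ι κ : Type*} [Fintype ι] [DecidableEq ι] [Fintype κ]
  {μ : Measure (unitaryGroup ι ℂ)} {ψ₀ : ι → ℂ} {ψ : κ → ι → ℂ}

/-- `ψ` is a complex projective `t`-design: its average `t`-fold moments are those of the random
vector `V *ᵥ ψ₀`, with `V` distributed according to `μ`. The `ψ m` may have different norms, so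
weighted designs, of weights `‖ψ m‖ ^ (2 * t)`, are included. -/
def IsProjectiveDesign (t : ℕ) (μ : Measure (unitaryGroup ι ℂ)) (ψ₀ : ι → ℂ) (ψ : κ → ι → ℂ) :
    Prop :=
  ∀ p q : Fin t → ι,
    (1 / Fintype.card κ : ℂ) * ∑ m, ∏ n, ψ m (p n) * starRingEnd ℂ (ψ m (q n)) =
      ∫ V, ∏ n, (V.1 *ᵥ ψ₀) (p n) * starRingEnd ℂ ((V.1 *ᵥ ψ₀) (q n)) ∂μ

theorem IsProjectiveDesign.average_norm_pow {t : ℕ} (hψ : IsProjectiveDesign t μ ψ₀ ψ) (i : ι) :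
    (1 / Fintype.card κ : ℝ) * ∑ m, ‖ψ m i‖ ^ (2 * t) =
      ∫ V, ‖(V.1 *ᵥ ψ₀) i‖ ^ (2 * t) ∂μ := by
  have hprod (z : ℂ) : ∏ _n : Fin t, z * starRingEnd ℂ z = ((‖z‖ ^ (2 * t) : ℝ) : ℂ) := by
    simp [Complex.mul_conj', pow_mul]
  have hdiag := hψ (fun _ => i) (fun _ => i)
  simp only [hprod, integral_complex_ofReal] at hdiag
  apply Complex.ofReal_injective
  simpa using hdiag

theorem IsProjectiveDesign.average_purity [μ.IsMulLeftInvariant] [IsProbabilityMeasure μ]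
    (hψ₀ : ∑ i, ‖ψ₀ i‖ ^ 2 = 1) (hψ : IsProjectiveDesign 2 μ ψ₀ ψ) :
    (1 / Fintype.card κ : ℝ) * ∑ m, ∑ i, ‖ψ m i‖ ^ 4 = 2 / (Fintype.card ι + 1) := by
  have : Nonempty ι := by
    by_contra hempty
    simp [not_nonempty_iff.mp hempty] at hψ₀
  calc (1 / Fintype.card κ : ℝ) * ∑ m, ∑ i, ‖ψ m i‖ ^ 4
      = ∑ i, (1 / Fintype.card κ : ℝ) * ∑ m, ‖ψ m i‖ ^ 4 := by
        rw [Finset.sum_comm, Finset.mul_sum]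
    _ = ∑ _i : ι, (2 / (Fintype.card ι * (Fintype.card ι + 1)) : ℝ) :=
        Finset.sum_congr rfl fun i _ =>
          (hψ.average_norm_pow i).trans (integral_norm_mulVec_pow_four μ hψ₀ i)
    _ = 2 / (Fintype.card ι + 1) := by
        rw [Finset.sum_const, Finset.card_univ, nsmul_eq_mul]
        field_simp

theorem design_average_purity_general [μ.IsMulLeftInvariant] [IsProbabilityMeasure μ]
    (hψ₀ : ∑ i, ‖ψ₀ i‖ ^ 2 = 1) (hψ : IsProjectiveDesign 2 μ ψ₀ ψ) :
    (1 / Fintype.card κ : ℝ) * ∑ m, ∑ i, ‖ψ m i‖ ^ 4 = 2 / (Fintype.card ι + 1) ∧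
    ((∃ P : ι → ℝ, ∀ m, ∃ σ : Equiv.Perm ι, ∀ i, ‖ψ m i‖ ^ 2 = P (σ i)) →
      ∀ m, ∑ i, ‖ψ m i‖ ^ 4 = 2 / (Fintype.card ι + 1)) := by
  refine ⟨hψ.average_purity hψ₀, fun ⟨P, hP⟩ m => ?_⟩
  have hpurity (m : κ) : ∑ i, ‖ψ m i‖ ^ 4 = ∑ i, P i ^ 2 := by
    obtain ⟨σ, hσ⟩ := hP m
    rw [← Equiv.sum_comp σ (P · ^ 2)]
    exact Finset.sum_congr rfl fun i _ => by rw [← hσ, ← pow_mul]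
  have hcard : (Fintype.card κ : ℝ) ≠ 0 := by
    have : Nonempty κ := ⟨m⟩
    exact Nat.cast_ne_zero.mpr Fintype.card_ne_zero
  have haverage := hψ.average_purity hψ₀
  simp only [hpurity, Finset.sum_const, Finset.card_univ, nsmul_eq_mul] at haverage
  rw [hpurity, ← haverage]
  field_simp

end Designs

/-- For a complex projective `2`-design, the average purity of the
decohered probability vectors is `2/(d+1)`; in particular, if all probability vectors agree
up to permutation, each state has purity `2/(d+1)`. -/
theorem design_average_purity (d M : ℕ) (hd : 1 ≤ d) (hM : 1 ≤ M)
    (μ : Measure (Matrix.unitaryGroup (Fin d) ℂ)) [μ.IsHaarMeasure] [IsProbabilityMeasure μ]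
    (ψ₀ : Fin d → ℂ) (hψ₀ : ∑ i, ‖ψ₀ i‖ ^ 2 = 1)
    (ψ : Fin M → (Fin d → ℂ)) (hψ : ∀ m, ∑ i, ‖ψ m i‖ ^ 2 = 1)
    (hdesign : ∀ p q : Fin 2 → Fin d,
      (1 / M : ℂ) * ∑ m, ∏ n, ψ m (p n) * (starRingEnd ℂ) (ψ m (q n)) =
        ∫ V : Matrix.unitaryGroup (Fin d) ℂ,
          ∏ n, (V : Matrix (Fin d) (Fin d) ℂ).mulVec ψ₀ (p n) *
            (starRingEnd ℂ) ((V : Matrix (Fin d) (Fin d) ℂ).mulVec ψ₀ (q n)) ∂μ) :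
    ((1 / M : ℝ) * ∑ m, ∑ i, ‖ψ m i‖ ^ 4 = 2 / (d + 1)) ∧
    ((∃ P : Fin d → ℝ, ∀ m, ∃ σ : Equiv.Perm (Fin d), ∀ i, ‖ψ m i‖ ^ 2 = P (σ i)) →
      ∀ m, ∑ i, ‖ψ m i‖ ^ 4 = 2 / (d + 1)) := by
  simpa only [Fintype.card_fin] using design_average_purity_general (κ := Fin M) hψ₀ (by
    simpa only [IsProjectiveDesign, Fintype.card_fin] using hdesign)
end

section
/- (The octahedron is a spherical 3-design.) Let σ be the normalized (probability) surface measure on the unit sphere S² ⊆ EuclideanSpace ℝ (Fin 3). Then for every p ∈ MvPolynomial (Fin 3) ℝ with totalDegree p ≤ 3, (1/6) Σ_{v ∈ {±e₁, ±e₂, ±e₃}} p(v) = ∫_{S²} p(x) dσ(x), where e₁, e₂, e₃ are the standard basis vectors (the six points being the vertices of a regular octahedron inscribed in the sphere). -/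
open MeasureTheory

/-- The normalized (probability) surface measure on the unit sphere
`S² ⊆ EuclideanSpace ℝ (Fin 3)`. -/
noncomputable def sphereProbMeasure :
    Measure (Metric.sphere (0 : EuclideanSpace ℝ (Fin 3)) 1) :=
  ((volume : Measure (EuclideanSpace ℝ (Fin 3))).toSphere Set.univ)⁻¹ •
    (volume : Measure (EuclideanSpace ℝ (Fin 3))).toSphere

/-! Everything depends only on signed-permutation symmetry. Sign changes kill each monomial with an
odd exponent, both on average over the vertices `±eᵢ` and over the sphere. In degree at most `3`
only `1` and the squares `Xᵢ²` remain; these squares have the same mean for every `i` by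
permutation symmetry, and they sum to `1` on the sphere. -/

open Metric MvPolynomial

section Monomials

variable {ι R : Type*}

lemma eval_update_neg_monomial_of_odd [CommRing R] [DecidableEq ι] {d : ι →₀ ℕ} {i : ι}
    (hi : Odd (d i)) (x : ι → R) (r : R) :
    eval (Function.update x i (-x i)) (monomial d r) = -eval x (monomial d r) := by
  have split_at (y : ι → R) :
      (d.prod fun j n => y j ^ n) = y i ^ d i * (d.erase i).prod fun j n => y j ^ n :=
    (Finsupp.mul_prod_erase' d i _ fun _ => pow_zero _).symm
  have rest_eq : ((d.erase i).prod fun j n => Function.update x i (-x i) j ^ n) =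
      (d.erase i).prod fun j n => x j ^ n :=
    Finset.prod_congr rfl fun j hj => by
      have hji : j ≠ i := by
        rintro rfl
        exact Finsupp.notMem_support_iff.2 Finsupp.erase_same hj
      simp only [Function.update_of_ne hji]
  rw [eval_monomial, eval_monomial, split_at, split_at, rest_eq, Function.update_self, hi.neg_pow]
  ring

lemma linearMap_apply_eq_of_totalDegree_le [CommSemiring R] {M : Type*} [AddCommMonoid M]
    [Module R M] {L L' : MvPolynomial ι R →ₗ[R] M} {n : ℕ}
    (h : ∀ d : ι →₀ ℕ, d.degree ≤ n → L (monomial d 1) = L' (monomial d 1))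
    {p : MvPolynomial ι R} (hp : p.totalDegree ≤ n) : L p = L' p := by
  rw [p.as_sum, map_sum, map_sum]
  refine Finset.sum_congr rfl fun d hd => ?_
  rw [← mul_one (coeff d p), ← smul_eq_mul, ← smul_monomial, map_smul, map_smul,
    h d ((le_totalDegree hd).trans hp)]

lemma exists_odd_or_eq_zero_or_eq_single_two {d : ι →₀ ℕ} (hd : d.degree ≤ 3) :
    (∃ i, Odd (d i)) ∨ d = 0 ∨ ∃ i, d = Finsupp.single i 2 := by
  refine or_iff_not_imp_left.2 fun hodd => or_iff_not_imp_left.2 fun hd0 => ?_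
  have heven (i : ι) : Even (d i) := Nat.not_odd_iff_even.1 fun hi => hodd ⟨i, hi⟩
  obtain ⟨i, hi⟩ := Finsupp.ne_iff.1 hd0
  have two_le : Finsupp.single i 2 ≤ d := by
    rw [Finsupp.single_le_iff]
    obtain ⟨k, hk⟩ := heven i
    simp only [Finsupp.coe_zero, Pi.zero_apply] at hi
    lia
  obtain ⟨e, rfl⟩ := exists_add_of_le two_le
  have he : e.degree ≤ 1 := by
    rw [map_add, Finsupp.degree_single] at hd
    lia
  suffices e = 0 from ⟨i, by rw [this, add_zero]⟩
  ext j
  have hj : Even (e j) := by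
    have := heven j
    by_cases hij : i = j <;> simp_all [Nat.even_add]
  have := (Finsupp.le_degree j e).trans he
  obtain ⟨k, hk⟩ := hj
  simp only [Finsupp.coe_zero, Pi.zero_apply]
  lia

end Monomials

section CrossPolytope

variable {ι : Type*} [Fintype ι] [DecidableEq ι]

variable (ι) in
/-- The mean value of a polynomial over the `2 * card ι` vertices `±eᵢ` of the cross-polytope
(the octahedron when `card ι = 3`), as a linear functional. -/
noncomputable def crossPolytopeMean : MvPolynomial ι ℝ →ₗ[ℝ] ℝ :=
  (1 / (2 * Fintype.card ι : ℝ)) • ∑ i,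
    ((aeval (Pi.single i 1)).toLinearMap + (aeval (-Pi.single i 1)).toLinearMap)

lemma crossPolytopeMean_apply (p : MvPolynomial ι ℝ) :
    crossPolytopeMean ι p =
      1 / (2 * Fintype.card ι) * ∑ i, (eval (Pi.single i 1) p + eval (-Pi.single i 1) p) := by
  simp [crossPolytopeMean, aeval_eq_eval]

lemma crossPolytopeMean_one [Nonempty ι] : crossPolytopeMean ι 1 = 1 := by
  rw [crossPolytopeMean_apply]
  simp only [map_one, Finset.sum_const, Finset.card_univ, nsmul_eq_mul]
  field_simp
  exact one_add_one_eq_two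

lemma crossPolytopeMean_X_sq (i : ι) : crossPolytopeMean ι (X i ^ 2) = 1 / Fintype.card ι := by
  have vertex_sq (k : ι) : eval (Pi.single k 1) (X i ^ 2) + eval (-Pi.single k 1) (X i ^ 2) =
      if i = k then (2 : ℝ) else 0 := by
    by_cases hik : i = k
    · subst hik
      norm_num
    · simp [hik]
  simp only [crossPolytopeMean_apply, vertex_sq, Finset.sum_ite_eq, Finset.mem_univ, if_true]
  field_simp

lemma crossPolytopeMean_monomial_of_odd {d : ι →₀ ℕ} {i : ι} (hi : Odd (d i)) :
    crossPolytopeMean ι (monomial d 1) = 0 := by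
  rw [crossPolytopeMean_apply, Finset.sum_eq_zero, mul_zero]
  intro k _
  have flip (x : ι → ℝ) := eval_update_neg_monomial_of_odd hi x 1
  by_cases hik : i = k
  · subst hik
    have swap_vertices : Function.update (Pi.single i 1 : ι → ℝ) i
        (-(Pi.single i 1 : ι → ℝ) i) = -Pi.single i 1 := by
      rw [Pi.single_eq_same, ← Pi.single_neg]
      exact Function.update_idem _ _ _
    rw [← swap_vertices, flip, add_neg_cancel]
  · have vanish (x : ι → ℝ) (hx : x i = 0) : eval x (monomial d (1 : ℝ)) = 0 := by
      have := flip x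
      rw [hx, neg_zero, ← hx, Function.update_eq_self] at this
      exact self_eq_neg.1 this
    rw [vanish _ (Pi.single_eq_of_ne hik 1), vanish _ (by simp [hik]), add_zero]

end CrossPolytope

section SphereMap

variable {E F : Type*} [NormedAddCommGroup E] [NormedSpace ℝ E]
  [NormedAddCommGroup F] [NormedSpace ℝ F]

/-- The homeomorphism between unit spheres induced by a linear isometry equivalence. -/
def unitSphereHomeomorph (A : E ≃ₗᵢ[ℝ] F) : sphere (0 : E) 1 ≃ₜ sphere (0 : F) 1 :=
  A.toHomeomorph.subtype fun x => by simp

lemma coe_unitSphereHomeomorph (A : E ≃ₗᵢ[ℝ] F) (x : sphere (0 : E) 1) :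
    (unitSphereHomeomorph A x : F) = A x :=
  rfl

open scoped Pointwise in
lemma measurePreserving_unitSphereHomeomorph [MeasurableSpace E] [BorelSpace E]
    [MeasurableSpace F] [BorelSpace F] {μ : Measure E} {ν : Measure F} {A : E ≃ₗᵢ[ℝ] F}
    (hA : MeasurePreserving A μ ν) :
    MeasurePreserving (unitSphereHomeomorph A) μ.toSphere ν.toSphere := by
  refine ⟨(unitSphereHomeomorph A).measurable, Measure.ext fun s hs => ?_⟩
  have hs' := (unitSphereHomeomorph A).measurable hs
  set t := unitSphereHomeomorph A ⁻¹' s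
  have cone_image : A '' (Set.Ioo (0 : ℝ) 1 • (Subtype.val '' t)) =
      Set.Ioo (0 : ℝ) 1 • (Subtype.val '' s) := by
    have : A '' (Subtype.val '' t) = Subtype.val '' s := by
      rw [← (unitSphereHomeomorph A).image_preimage s, Set.image_image, Set.image_image]
      rfl
    rw [← this]
    exact Set.image_image2_distrib_right fun r x => map_smul A r x
  rw [Measure.map_apply (unitSphereHomeomorph A).measurable hs, Measure.toSphere_apply' _ hs',
    Measure.toSphere_apply' _ hs, A.toLinearEquiv.finrank_eq, ← cone_image,
    ← hA.measure_preimage_emb A.toHomeomorph.measurableEmbedding,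
    Set.preimage_image_eq _ A.injective]

end SphereMap

section HyperoctahedralInvariance

variable {ι : Type*} [Fintype ι] [DecidableEq ι]

/-- The reflection of `ℝ^ι` changing the sign of the `i`-th coordinate. -/
noncomputable def coordinateReflection (i : ι) :
    EuclideanSpace ℝ ι ≃ₗᵢ[ℝ] EuclideanSpace ℝ ι :=
  LinearIsometryEquiv.piLpCongrRight 2
    (Function.update (fun _ => LinearIsometryEquiv.refl ℝ ℝ) i (LinearIsometryEquiv.neg ℝ))

lemma coe_coordinateReflection (i : ι) (x : EuclideanSpace ℝ ι) :
    ⇑(coordinateReflection i x) = Function.update x i (-x i) := by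
  ext j
  by_cases hj : j = i
  · subst hj
    simp [coordinateReflection]
  · simp [coordinateReflection, hj]

/-- The isometry of `ℝ^ι` exchanging the `i`-th and `j`-th coordinates. -/
noncomputable def coordinateSwap (i j : ι) :
    EuclideanSpace ℝ ι ≃ₗᵢ[ℝ] EuclideanSpace ℝ ι :=
  LinearIsometryEquiv.piLpCongrLeft 2 ℝ ℝ (Equiv.swap i j)

lemma coordinateSwap_apply_left (i j : ι) (x : EuclideanSpace ℝ ι) :
    coordinateSwap i j x i = x j := by
  simp [coordinateSwap, Equiv.piCongrLeft'_apply]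

/-- Invariance of a measure on the unit sphere of `ℝ^ι` under the hyperoctahedral group of signed
permutations of the coordinates, expressed on generators of that group. -/
structure IsHyperoctahedralInvariant (σ : Measure (sphere (0 : EuclideanSpace ℝ ι) 1)) :
    Prop where
  reflection (i : ι) : MeasurePreserving (unitSphereHomeomorph (coordinateReflection i)) σ σ
  swap (i j : ι) : MeasurePreserving (unitSphereHomeomorph (coordinateSwap i j)) σ σ

lemma isHyperoctahedralInvariant_smul_toSphere (c : ENNReal) :
    IsHyperoctahedralInvariant (c • (volume : Measure (EuclideanSpace ℝ ι)).toSphere) where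
  reflection i := (measurePreserving_unitSphereHomeomorph
    (coordinateReflection i).measurePreserving).smul_measure c
  swap i j := (measurePreserving_unitSphereHomeomorph
    (coordinateSwap i j).measurePreserving).smul_measure c

end HyperoctahedralInvariance

section SphereIntegral

variable {ι : Type*} [Fintype ι] (σ : Measure (sphere (0 : EuclideanSpace ℝ ι) 1))

lemma integrable_eval_sphere [IsFiniteMeasure σ] (p : MvPolynomial ι ℝ) :
    Integrable (fun x : sphere (0 : EuclideanSpace ℝ ι) 1 => eval (x : EuclideanSpace ℝ ι) p) σ :=
  have : Continuous fun x : sphere (0 : EuclideanSpace ℝ ι) 1 =>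
      eval (x : EuclideanSpace ℝ ι) p :=
    p.continuous_eval.comp (by fun_prop)
  this.integrable_of_hasCompactSupport (HasCompactSupport.of_compactSpace _)

/-- Integration of polynomials over the unit sphere of `ℝ^ι`, as a linear functional. -/
noncomputable def sphereIntegral [IsFiniteMeasure σ] : MvPolynomial ι ℝ →ₗ[ℝ] ℝ where
  toFun p := ∫ x, eval (x : EuclideanSpace ℝ ι) p ∂σ
  map_add' p q := by
    simp only [map_add]
    exact integral_add (integrable_eval_sphere σ p) (integrable_eval_sphere σ q)
  map_smul' r p := by
    simp only [smul_eval, RingHom.id_apply, smul_eq_mul]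
    exact integral_const_mul r _

lemma sphereIntegral_apply [IsFiniteMeasure σ] (p : MvPolynomial ι ℝ) :
    sphereIntegral σ p = ∫ x, eval (x : EuclideanSpace ℝ ι) p ∂σ :=
  rfl

lemma sphereIntegral_one [IsProbabilityMeasure σ] : sphereIntegral σ 1 = 1 := by
  simp [sphereIntegral_apply]

lemma sum_sphereIntegral_X_sq [IsProbabilityMeasure σ] :
    ∑ i, sphereIntegral σ (X i ^ 2) = 1 := by
  rw [← map_sum, sphereIntegral_apply]
  have sum_sq (x : sphere (0 : EuclideanSpace ℝ ι) 1) :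
      eval (x : EuclideanSpace ℝ ι) (∑ i, X i ^ 2) = 1 := by
    simp only [map_sum, map_pow, eval_X]
    rw [← EuclideanSpace.real_norm_sq_eq, norm_eq_of_mem_sphere, one_pow]
  simp [sum_sq]

variable [DecidableEq ι] {σ}

lemma sphereIntegral_X_sq [IsProbabilityMeasure σ] (hσ : IsHyperoctahedralInvariant σ) (i : ι) :
    sphereIntegral σ (X i ^ 2) = 1 / Fintype.card ι := by
  have all_eq (j : ι) : sphereIntegral σ (X j ^ 2) = sphereIntegral σ (X i ^ 2) := by
    simp only [sphereIntegral_apply, map_pow, eval_X]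
    rw [← (hσ.swap j i).integral_comp (unitSphereHomeomorph _).measurableEmbedding]
    simp only [coe_unitSphereHomeomorph, coordinateSwap_apply_left]
  have card_mul : Fintype.card ι * sphereIntegral σ (X i ^ 2) = 1 := by
    simpa [all_eq] using sum_sphereIntegral_X_sq σ
  exact eq_one_div_of_mul_eq_one_right card_mul

lemma sphereIntegral_monomial_of_odd [IsFiniteMeasure σ] (hσ : IsHyperoctahedralInvariant σ)
    {d : ι →₀ ℕ} {i : ι} (hi : Odd (d i)) : sphereIntegral σ (monomial d 1) = 0 := by
  refine self_eq_neg.1 ?_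
  calc sphereIntegral σ (monomial d 1)
    _ = ∫ x, eval (unitSphereHomeomorph (coordinateReflection i) x : EuclideanSpace ℝ ι)
          (monomial d 1) ∂σ :=
        ((hσ.reflection i).integral_comp (unitSphereHomeomorph _).measurableEmbedding
          fun x => eval (x : EuclideanSpace ℝ ι) (monomial d 1)).symm
    _ = ∫ x, -eval (x : EuclideanSpace ℝ ι) (monomial d 1) ∂σ := by
        simp only [coe_unitSphereHomeomorph, coe_coordinateReflection,
          eval_update_neg_monomial_of_odd hi]
    _ = -sphereIntegral σ (monomial d 1) := integral_neg _

end SphereIntegral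

theorem octahedron_is_spherical_three_design_general {ι : Type*} [Fintype ι] [DecidableEq ι]
    {σ : Measure (sphere (0 : EuclideanSpace ℝ ι) 1)} [IsProbabilityMeasure σ]
    (hσ : IsHyperoctahedralInvariant σ) (p : MvPolynomial ι ℝ) (hp : p.totalDegree ≤ 3) :
    1 / (2 * Fintype.card ι : ℝ) * ∑ i, (eval (Pi.single i 1) p + eval (-Pi.single i 1) p) =
      ∫ x, eval (x : EuclideanSpace ℝ ι) p ∂σ := by
  rw [← crossPolytopeMean_apply, ← sphereIntegral_apply]
  refine linearMap_apply_eq_of_totalDegree_le (fun d hd => ?_) hp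
  obtain ⟨i, hi⟩ | rfl | ⟨i, rfl⟩ := exists_odd_or_eq_zero_or_eq_single_two hd
  · rw [crossPolytopeMean_monomial_of_odd hi, sphereIntegral_monomial_of_odd hσ hi]
  · obtain ⟨x⟩ := nonempty_of_isProbabilityMeasure σ
    have : Nonempty ι := by
      by_contra hι
      rw [not_nonempty_iff] at hι
      exact isEmptyElim x
    rw [monomial_zero', C_1, crossPolytopeMean_one, sphereIntegral_one]
  · rw [← X_pow_eq_monomial, crossPolytopeMean_X_sq, sphereIntegral_X_sq hσ]

instance : IsProbabilityMeasure sphereProbMeasure :=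
  have : NeZero (volume : Measure (EuclideanSpace ℝ (Fin 3))).toSphere :=
    ⟨Measure.toSphere_ne_zero _⟩
  isProbabilityMeasureSMul

lemma isHyperoctahedralInvariant_sphereProbMeasure :
    IsHyperoctahedralInvariant sphereProbMeasure :=
  isHyperoctahedralInvariant_smul_toSphere _

/-- The six vertices `±e₁, ±e₂, ±e₃` of the regular octahedron form a
spherical `3`-design: they average all polynomials of total degree at most `3` with respect
to the normalized surface measure on the unit sphere `S²`. -/
theorem octahedron_is_spherical_three_design
    (p : MvPolynomial (Fin 3) ℝ) (hp : p.totalDegree ≤ 3) :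
    (1 / 6 : ℝ) * ∑ i : Fin 3,
        (MvPolynomial.eval (Pi.single i (1 : ℝ)) p +
          MvPolynomial.eval (-Pi.single i (1 : ℝ)) p) =
      ∫ x : Metric.sphere (0 : EuclideanSpace ℝ (Fin 3)) 1,
        MvPolynomial.eval (fun j => (x : EuclideanSpace ℝ (Fin 3)) j) p ∂sphereProbMeasure := by
  rw [show (6 : ℝ) = 2 * Fintype.card (Fin 3) by norm_num]
  exact octahedron_is_spherical_three_design_general
    isHyperoctahedralInvariant_sphereProbMeasure p hp
end
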